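/- For every x > 0, ∑_{n=1}^∞ (1/√(n² + x²) − 1/n) + 1/(2x) + γ + log(x/2) = 2·∑_{n=1}^∞ K₀(2πnx). -/

import Mathlib

/-!
The identity is an integrated form of the partial fraction expansion of the hyperbolic cotangent,
`2 / (exp (2 * π * y) - 1) = -1 + 1 / (π * y) + (2 * y / π) * ∑ n ≥ 1, 1 / (y ^ 2 + n ^ 2)`.

Substituting `t = √(1 + u ^ 2)` in the definition of `K₀` and summing a geometric series gives
`∑ n ≥ 1, K₀ (2πnx) = ∫ u > 0, 1 / ((exp (2πxt) - 1) * t)` (`besselK0_eq`, `hasSum_besselK0`).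
Now take `y = x * t` in the expansion and divide by `t`. The series becomes a sum over `n` of the
kernel `k u s = (2 * x / π) / (x ^ 2 * (1 + u ^ 2) + s ^ 2)` at `s = n`, while the constant `-1`
becomes `-1 / t = -∫ s > 0, k u s`, which is not integrable in `u`. The two are therefore kept
together, as the limit of
`F N u = ∑ n ≤ N, k u n - ∫ s in 0..N, k u s` (`tendsto_sum_sub_integral`).
Since `k u` decreases in `s`, comparing sum and integral gives `|F N u| ≤ k u 0`
(`abs_sum_sub_integral_le`), which is integrable in `u`, so dominated convergence applies.

As `∫ u > 0, k u s = 1 / √(s ^ 2 + x ^ 2)` (`integral_watsonKernel`), Fubini's theorem yields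
`∫ u > 0, F N u = ∑ n ≤ N, 1 / √(n ^ 2 + x ^ 2) - arsinh (N / x)`, and `arsinh (N / x)` is
`log N - log (x / 2) + o(1)`. Comparison with `∑ n ≤ N, 1 / n = log N + γ + o(1)` produces the
constants `γ + log (x / 2)`; the term `1 / (π * y)` contributes `1 / (2 * x)`.
-/

/-- The modified Bessel function of the second kind of order zero, `K₀(z)`, for real `z > 0`,
defined by its standard integral representation. -/
noncomputable def besselK0 (z : ℝ) : ℝ :=
  ∫ t in Set.Ioi (1 : ℝ), Real.exp (-(z * t)) * (t ^ 2 - 1) ^ (-(1 / 2) : ℝ)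

open Real Set Filter Topology MeasureTheory

theorem integrable_inv_sq_add_sq {w : ℝ} (hw : 0 < w) :
    Integrable (fun s : ℝ => (w ^ 2 + s ^ 2)⁻¹) := by
  have h := (integrable_inv_one_add_sq.comp_mul_left' (inv_ne_zero hw.ne')).const_mul (w ^ 2)⁻¹
  refine h.congr (ae_of_all _ fun s => ?_)
  simp only
  rw [← mul_inv]
  congr 1
  field_simp

theorem integral_Ioi_inv_sq_add_sq {w : ℝ} (hw : 0 < w) :
    ∫ s in Ioi (0 : ℝ), (w ^ 2 + s ^ 2)⁻¹ = π / (2 * w) := by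
  have h := integral_comp_mul_left_Ioi (fun v : ℝ => (1 + v ^ 2)⁻¹) 0 (inv_pos.mpr hw)
  have h2 : ∀ s : ℝ, (w ^ 2 + s ^ 2)⁻¹ = (w ^ 2)⁻¹ * (1 + (w⁻¹ * s) ^ 2)⁻¹ := fun s => by
    rw [← mul_inv]
    congr 1
    field_simp
  simp_rw [h2]
  rw [integral_const_mul, h, mul_zero, integral_Ioi_inv_one_add_sq]
  simp only [arctan_zero, sub_zero, inv_inv, smul_eq_mul]
  field_simp

/-- The kernel whose values at `s = n` are the partial fractions of `coth (π * x * t) / t`, where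
`t = √(1 + u ^ 2)`. -/
noncomputable def watsonKernel (x u s : ℝ) : ℝ := 2 * x / π * (x ^ 2 * (1 + u ^ 2) + s ^ 2)⁻¹

/-- The kernel as a multiple of a Cauchy density in `u`. -/
theorem watsonKernel_eq {x : ℝ} (hx : 0 < x) (u s : ℝ) :
    watsonKernel x u s = 2 / (π * x) * ((√(x ^ 2 + s ^ 2) / x) ^ 2 + u ^ 2)⁻¹ := by
  rw [watsonKernel, div_pow, sq_sqrt (by positivity)]
  have : x ^ 2 * (1 + u ^ 2) + s ^ 2 ≠ 0 := by positivity
  have : (x ^ 2 + s ^ 2) / x ^ 2 + u ^ 2 ≠ 0 := by positivity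
  field_simp
  ring

/-- The kernel as a multiple of a Cauchy density in `s`. -/
theorem watsonKernel_eq' {x : ℝ} (u s : ℝ) :
    watsonKernel x u s = 2 * x / π * ((x * √(1 + u ^ 2)) ^ 2 + s ^ 2)⁻¹ := by
  rw [watsonKernel, mul_pow, sq_sqrt (by positivity)]

theorem integrable_watsonKernel {x : ℝ} (hx : 0 < x) (s : ℝ) :
    Integrable (fun u => watsonKernel x u s) := by
  simp_rw [watsonKernel_eq hx]
  exact (integrable_inv_sq_add_sq (by positivity)).const_mul _

theorem integral_watsonKernel {x : ℝ} (hx : 0 < x) (s : ℝ) :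
    ∫ u in Ioi (0 : ℝ), watsonKernel x u s = 1 / √(s ^ 2 + x ^ 2) := by
  simp_rw [watsonKernel_eq hx]
  have : 0 < √(x ^ 2 + s ^ 2) := by positivity
  rw [integral_const_mul, integral_Ioi_inv_sq_add_sq (by positivity), add_comm (s ^ 2)]
  field_simp

theorem watsonKernel_nonneg {x : ℝ} (hx : 0 < x) (u s : ℝ) : 0 ≤ watsonKernel x u s := by
  unfold watsonKernel; positivity

theorem watsonKernel_antitoneOn {x : ℝ} (hx : 0 < x) (u : ℝ) :
    AntitoneOn (watsonKernel x u) (Ici 0) := by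
  intro a ha b hb hab
  have ha' : (0 : ℝ) ≤ a := ha
  unfold watsonKernel
  gcongr

theorem continuous_watsonKernel {x : ℝ} (hx : 0 < x) :
    Continuous (fun p : ℝ × ℝ => watsonKernel x p.2 p.1) := by
  unfold watsonKernel
  refine continuous_const.mul (Continuous.inv₀ (by fun_prop) fun p => ?_)
  positivity

/-- Domination by the kernel at `s = 0`, which makes Fubini's theorem applicable. -/
theorem integrable_uncurry_watsonKernel {x : ℝ} (hx : 0 < x) (N : ℝ) :
    Integrable (Function.uncurry fun s u => watsonKernel x u s)
      ((volume.restrict (uIoc 0 N)).prod (volume.restrict (Ioi 0))) := by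
  have h1 : Integrable (fun _ : ℝ => (1 : ℝ)) (volume.restrict (uIoc 0 N)) := by
    simp [uIoc]
  have h2 : Integrable (fun u => watsonKernel x u 0) (volume.restrict (Ioi 0)) :=
    (integrable_watsonKernel hx 0).integrableOn
  refine (h1.mul_prod h2).mono' (continuous_watsonKernel hx).aestronglyMeasurable
    (ae_of_all _ fun p => ?_)
  simp only [Function.uncurry, one_mul]
  rw [norm_of_nonneg (watsonKernel_nonneg hx _ _)]
  unfold watsonKernel
  gcongr 2 * x / π * (?_)⁻¹
  nlinarith [sq_nonneg p.1]

theorem integral_integral_watsonKernel {x : ℝ} (hx : 0 < x) (N : ℝ) :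
    ∫ u in Ioi (0 : ℝ), ∫ s in (0 : ℝ)..N, watsonKernel x u s = arsinh (N / x) := by
  rw [← intervalIntegral_integral_swap (integrable_uncurry_watsonKernel hx N)]
  simp_rw [integral_watsonKernel hx]
  have hd : ∀ s ∈ uIcc 0 N, HasDerivAt (fun s => arsinh (s / x)) (1 / √(s ^ 2 + x ^ 2)) s := by
    intro s _
    convert! ((hasDerivAt_id s).div_const x).arsinh using 1
    have : 1 + (s / x) ^ 2 = (s ^ 2 + x ^ 2) / x ^ 2 := by field_simp; ring
    simp only [id, this, smul_eq_mul]
    rw [sqrt_div' _ (by positivity), sqrt_sq hx.le]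
    field_simp
  rw [intervalIntegral.integral_eq_sub_of_hasDerivAt hd]
  · simp
  · refine ContinuousOn.intervalIntegrable (Continuous.continuousOn ?_)
    refine Continuous.div (by fun_prop) (by fun_prop) fun s => ?_
    positivity

/-- Comparison of the sum with the integral of a decreasing function, uniformly in `N`. -/
theorem abs_sum_sub_integral_le {x : ℝ} (hx : 0 < x) (u : ℝ) (N : ℕ) :
    |∑ n ∈ Finset.range N, watsonKernel x u (n + 1) - ∫ s in (0 : ℝ)..N, watsonKernel x u s|
      ≤ watsonKernel x u 0 := by
  have ha : AntitoneOn (watsonKernel x u) (Icc (0 : ℝ) (0 + N)) :=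
    (watsonKernel_antitoneOn hx u).mono Icc_subset_Ici_self
  have h1 := ha.sum_le_integral
  have h2 := ha.integral_le_sum
  have h3 := Finset.sum_range_succ' (fun n : ℕ => watsonKernel x u n) N
  rw [Finset.sum_range_succ] at h3
  simp only [zero_add, Nat.cast_add, Nat.cast_one, Nat.cast_zero] at h1 h2 h3
  have h4 := watsonKernel_nonneg hx u N
  have h5 := watsonKernel_nonneg hx u 0
  rw [abs_le]
  constructor <;> linarith

/-- Mathlib's partial fraction expansion of the cotangent at `I * y`, that is, the expansion of
`coth (π * y) = 1 + 2 / (exp (2 * π * y) - 1)`. -/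
theorem tendsto_sum_coth {y : ℝ} (hy : 0 < y) :
    Tendsto (fun N : ℕ => ∑ n ∈ Finset.range N, 2 * y / π * (y ^ 2 + ((n : ℝ) + 1) ^ 2)⁻¹) atTop
      (𝓝 (1 + 2 / (exp (2 * π * y) - 1) - 1 / (π * y))) := by
  have hz : (Complex.I * y : ℂ) ∈ Complex.integerComplement := by
    rw [Complex.mem_integerComplement_iff]
    rintro ⟨n, hn⟩
    have := congrArg Complex.im hn
    simp at this
    exact hy.ne this
  have h := ((tendsto_logDeriv_euler_cot_sub hz).mul_const (Complex.I / π))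
  have hlim : (π * Complex.cot (π * (Complex.I * y)) - 1 / (Complex.I * y)) * (Complex.I / π)
      = ((1 + 2 / (exp (2 * π * y) - 1) - 1 / (π * y) : ℝ) : ℂ) := by
    rw [Complex.cot_pi_eq_exp_ratio]
    have he : Complex.exp (2 * π * Complex.I * (Complex.I * y)) = ((exp (2 * π * y))⁻¹ : ℝ) := by
      rw [← Real.exp_neg]
      push_cast
      congr 1
      linear_combination (2 * π * y : ℂ) * Complex.I_mul_I
    rw [he]
    have h1 : (1 : ℝ) < exp (2 * π * y) := by rw [Real.one_lt_exp_iff]; positivity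
    generalize exp (2 * π * y) = E at h1 ⊢
    have hE : (E : ℂ) - 1 ≠ 0 := by
      rw [sub_ne_zero]; exact_mod_cast h1.ne'
    have hE0 : (E : ℂ) ≠ 0 := by exact_mod_cast (by linarith : E ≠ 0)
    have hyc : (y : ℂ) ≠ 0 := by exact_mod_cast hy.ne'
    have hpi : (π : ℂ) ≠ 0 := by exact_mod_cast pi_ne_zero
    have hE1 : 1 - (E : ℂ)⁻¹ ≠ 0 := by
      intro h; apply hE; field_simp at h; simpa using h
    push_cast
    field_simp
    ring
  rw [hlim] at h
  have h' := (Complex.continuous_re.tendsto _).comp h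
  rw [Complex.ofReal_re] at h'
  refine h'.congr fun N => ?_
  have : (∑ j ∈ Finset.range N, cotTerm (Complex.I * y) j) * (Complex.I / π) =
      ((∑ n ∈ Finset.range N, 2 * y / π * (y ^ 2 + ((n : ℝ) + 1) ^ 2)⁻¹ : ℝ) : ℂ) := by
    rw [Finset.sum_mul, Complex.ofReal_sum]
    refine Finset.sum_congr rfl fun n _ => ?_
    rw [cotTerm_identity hz]
    have e : (Complex.I * y + (n + 1)) * (Complex.I * y - (n + 1)) =
      -((y ^ 2 + ((n : ℝ) + 1) ^ 2 : ℝ) : ℂ) := by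
      push_cast
      linear_combination (y ^ 2 : ℂ) * Complex.I_mul_I
    rw [e]
    have hpi : (π : ℂ) ≠ 0 := by exact_mod_cast pi_ne_zero
    have : ((y ^ 2 + ((n : ℝ) + 1) ^ 2 : ℝ) : ℂ) ≠ 0 := by
      exact_mod_cast (by positivity : (y ^ 2 + ((n : ℝ) + 1) ^ 2 : ℝ) ≠ 0)
    generalize ((y ^ 2 + ((n : ℝ) + 1) ^ 2 : ℝ)) = D at this ⊢
    push_cast
    field_simp
    linear_combination (-y : ℂ) * Complex.I_sq
  simp only [Function.comp, this, Complex.ofReal_re]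

theorem tendsto_sum_sub_integral {x : ℝ} (hx : 0 < x) (u : ℝ) :
    Tendsto (fun N : ℕ => ∑ n ∈ Finset.range N, watsonKernel x u (n + 1)
        - ∫ s in (0 : ℝ)..N, watsonKernel x u s) atTop
      (𝓝 (2 * ((exp (2 * π * x * √(1 + u ^ 2)) - 1)⁻¹ / √(1 + u ^ 2))
        - 1 / (π * x) * (1 + u ^ 2)⁻¹)) := by
  set t := √(1 + u ^ 2) with ht
  have htp : 0 < t := by positivity
  have ht2 : 1 + u ^ 2 = t ^ 2 := by rw [ht, sq_sqrt (by positivity)]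
  have hxt : 0 < x * t := by positivity
  have h_int := intervalIntegral_tendsto_integral_Ioi 0
    ((integrable_inv_sq_add_sq hxt).integrableOn (s := Ioi 0)) tendsto_natCast_atTop_atTop
  rw [integral_Ioi_inv_sq_add_sq hxt] at h_int
  have h := ((tendsto_sum_coth hxt).mul_const t⁻¹).sub (h_int.const_mul (2 * x / π))
  convert! h using 2
  · simp_rw [watsonKernel_eq', ← ht, intervalIntegral.integral_const_mul, Finset.sum_mul]
    congr 1
    refine Finset.sum_congr rfl fun n _ => ?_
    field_simp
  · rw [ht2]
    have h1 : exp (2 * π * (x * t)) - 1 ≠ 0 := by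
      rw [sub_ne_zero]
      exact (by rw [Real.one_lt_exp_iff]; positivity : 1 < exp (2 * π * (x * t))).ne'
    rw [← mul_assoc] at h1 ⊢
    field_simp
    ring

/-- The substitution `t = √(1 + u ^ 2)` removes the endpoint singularity in the definition of
`K₀`. Both sides are junk values together, so no condition on `z` is needed. -/
theorem besselK0_eq (z : ℝ) :
    besselK0 z = ∫ u in Ioi (0 : ℝ), exp (-(z * √(1 + u ^ 2))) / √(1 + u ^ 2) := by
  have himg : (fun u : ℝ => √(1 + u ^ 2)) '' Ioi 0 = Ioi 1 := by
    ext t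
    simp only [mem_image, mem_Ioi]
    constructor
    · rintro ⟨u, hu, rfl⟩
      rw [lt_sqrt (by norm_num)]
      nlinarith
    · intro ht
      refine ⟨√(t ^ 2 - 1), sqrt_pos.mpr (by nlinarith), ?_⟩
      rw [sq_sqrt (by nlinarith), add_sub_cancel, sqrt_sq (by linarith)]
  have hinj : InjOn (fun u : ℝ => √(1 + u ^ 2)) (Ioi 0) := by
    intro a ha b hb hab
    simp only [mem_Ioi] at ha hb
    have := (sqrt_inj (by positivity) (by positivity)).mp hab
    nlinarith
  have hd : ∀ u ∈ Ioi (0 : ℝ), HasDerivWithinAt (fun u : ℝ => √(1 + u ^ 2))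
      (u / √(1 + u ^ 2)) (Ioi 0) u := by
    intro u _
    have := (((hasDerivAt_id u).pow 2).const_add 1).sqrt (by simp; positivity)
    convert! this.hasDerivWithinAt using 1
    simp
    field_simp
  rw [besselK0, ← himg, integral_image_eq_integral_abs_deriv_smul measurableSet_Ioi hd hinj]
  refine setIntegral_congr_fun measurableSet_Ioi fun u hu => ?_
  simp only [mem_Ioi] at hu
  simp only [smul_eq_mul]
  rw [sq_sqrt (by positivity), add_sub_cancel_left, abs_of_nonneg (by positivity),
    rpow_neg (by positivity), ← sqrt_eq_rpow, sqrt_sq hu.le]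
  field_simp

/-- Termwise integration of the geometric series for `1 / (exp (2 * π * x * t) - 1)`; its integral
converges because `exp y - 1 ≥ y` bounds the integrand by a multiple of `1 / (1 + u ^ 2)`. -/
theorem hasSum_besselK0 {x : ℝ} (hx : 0 < x) :
    HasSum (fun n : ℕ => besselK0 (2 * π * (n + 1) * x))
      (∫ u in Ioi (0 : ℝ), (exp (2 * π * x * √(1 + u ^ 2)) - 1)⁻¹ / √(1 + u ^ 2)) ∧
    IntegrableOn (fun u : ℝ => (exp (2 * π * x * √(1 + u ^ 2)) - 1)⁻¹ / √(1 + u ^ 2)) (Ioi 0) := by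
  have hs : ∀ u : ℝ, HasSum
      (fun n : ℕ => exp (-(2 * π * (n + 1) * x * √(1 + u ^ 2))) / √(1 + u ^ 2))
      ((exp (2 * π * x * √(1 + u ^ 2)) - 1)⁻¹ / √(1 + u ^ 2)) := by
    intro u
    have hp : 0 < 2 * π * x * √(1 + u ^ 2) := by positivity
    refine HasSum.div_const ?_ _
    have hg := (hasSum_geometric_of_lt_one (exp_pos (-(2 * π * x * √(1 + u ^ 2)))).le
      (by rw [exp_lt_one_iff]; linarith)).mul_left (exp (-(2 * π * x * √(1 + u ^ 2))))
    convert! hg using 1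
    · ext n
      rw [← exp_nat_mul, ← exp_add]
      congr 1
      ring
    · have : exp (2 * π * x * √(1 + u ^ 2)) - 1 ≠ 0 := by
        rw [sub_ne_zero]
        exact (Real.one_lt_exp_iff.mpr hp).ne'
      rw [exp_neg]
      field_simp
  have h_int : IntegrableOn
      (fun u : ℝ => (exp (2 * π * x * √(1 + u ^ 2)) - 1)⁻¹ / √(1 + u ^ 2)) (Ioi 0) := by
    refine ((integrable_inv_one_add_sq.const_mul (2 * π * x)⁻¹).integrableOn).mono'
      (Measurable.aestronglyMeasurable (by fun_prop)) (ae_of_all _ fun u => ?_)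
    have htp : 0 < √(1 + u ^ 2) := by positivity
    have ht2 : 1 + u ^ 2 = √(1 + u ^ 2) ^ 2 := by rw [sq_sqrt (by positivity)]
    rw [ht2, sqrt_sq htp.le]
    generalize √(1 + u ^ 2) = t at htp
    have h1 : 2 * π * x * t ≤ exp (2 * π * x * t) - 1 := by
      linarith [add_one_le_exp (2 * π * x * t)]
    have h2 : 0 < 2 * π * x * t := by positivity
    rw [norm_of_nonneg (div_nonneg (inv_nonneg.mpr (h2.le.trans h1)) htp.le)]
    calc _ ≤ (2 * π * x * t)⁻¹ / t := by gcongr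
      _ = _ := by field_simp
  refine ⟨?_, h_int⟩
  simp_rw [besselK0_eq]
  refine hasSum_integral_of_dominated_convergence
    (fun n u => exp (-(2 * π * (n + 1) * x * √(1 + u ^ 2))) / √(1 + u ^ 2))
    (fun n => Measurable.aestronglyMeasurable (by fun_prop))
    (fun n => ae_of_all _ fun u => ?_) (ae_of_all _ fun u => (hs u).summable) ?_
    (ae_of_all _ hs)
  · rw [norm_of_nonneg (by positivity)]
  · simp_rw [fun u => (hs u).tsum_eq]
    exact h_int

theorem tendsto_arsinh_sub_log {x : ℝ} (hx : 0 < x) :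
    Tendsto (fun N : ℕ => arsinh (N / x) - log N) atTop (𝓝 (-log (x / 2))) := by
  have h1 : Tendsto (fun N : ℕ => x⁻¹ + √((((N : ℝ)⁻¹) ^ 2) + (x⁻¹) ^ 2)) atTop
      (𝓝 (x⁻¹ + √(0 ^ 2 + (x⁻¹) ^ 2))) :=
    ((((tendsto_inv_atTop_nhds_zero_nat (𝕜 := ℝ)).pow 2).add_const _).sqrt).const_add _
  have h0 : x⁻¹ + √(0 ^ 2 + (x⁻¹) ^ 2) = (x / 2)⁻¹ := by
    rw [zero_pow two_ne_zero, zero_add, sqrt_sq (by positivity)]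
    field_simp; norm_num
  rw [h0] at h1
  have h2 := h1.log (by positivity)
  rw [log_inv] at h2
  refine h2.congr' ?_
  filter_upwards [eventually_gt_atTop 0] with N hN
  have hN' : (0 : ℝ) < N := by exact_mod_cast hN
  rw [arsinh, ← log_div (by positivity) (by positivity)]
  congr 1
  have : 1 + (N / x) ^ 2 = (N : ℝ) ^ 2 * ((((N : ℝ)⁻¹) ^ 2) + (x⁻¹) ^ 2) := by field_simp
  rw [this, sqrt_mul (by positivity), sqrt_sq hN'.le]
  field_simp

theorem watson_K0_identity (x : ℝ) (hx : 0 < x) :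
    (∑' n : ℕ, (1 / Real.sqrt ((n + 1) ^ 2 + x ^ 2) - 1 / (n + 1)))
      + 1 / (2 * x) + Real.eulerMascheroniConstant + Real.log (x / 2) =
      2 * ∑' n : ℕ, besselK0 (2 * Real.pi * (n + 1) * x) := by
  obtain ⟨hK, hKint⟩ := hasSum_besselK0 hx
  have hI : ∀ N : ℕ, IntegrableOn (fun u => ∫ s in (0 : ℝ)..N, watsonKernel x u s) (Ioi 0) := by
    intro N
    have := (integrable_uncurry_watsonKernel hx N).integral_prod_right
    simpa [IntegrableOn, intervalIntegral.integral_of_le, uIoc_of_le] using this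
  have hS : ∀ N : ℕ, IntegrableOn
      (fun u => ∑ n ∈ Finset.range N, watsonKernel x u (n + 1)) (Ioi 0) := fun N =>
    integrable_finsetSum _ fun n _ => (integrable_watsonKernel hx _).integrableOn
  have hval : ∀ N : ℕ, ∫ u in Ioi (0 : ℝ), (∑ n ∈ Finset.range N, watsonKernel x u (n + 1)
      - ∫ s in (0 : ℝ)..N, watsonKernel x u s)
      = ∑ n ∈ Finset.range N, 1 / √(((n : ℝ) + 1) ^ 2 + x ^ 2) - arsinh (N / x) := by
    intro N
    rw [integral_sub (hS N) (hI N), integral_integral_watsonKernel hx,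
      integral_finsetSum _ fun n _ => (integrable_watsonKernel hx _).integrableOn]
    simp_rw [integral_watsonKernel hx]
  have hlim := tendsto_integral_of_dominated_convergence (μ := volume.restrict (Ioi (0 : ℝ)))
    (fun u => watsonKernel x u 0)
    (fun N => ((hS N).sub (hI N)).aestronglyMeasurable)
    (integrable_watsonKernel hx 0).integrableOn
    (fun N => ae_of_all _ fun u => abs_sum_sub_integral_le hx u N)
    (ae_of_all _ fun u => tendsto_sum_sub_integral hx u)
  simp only [Pi.sub_apply] at hlim
  rw [integral_sub (hKint.const_mul 2) (integrable_inv_one_add_sq.const_mul _).integrableOn,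
    integral_const_mul, integral_const_mul, integral_Ioi_inv_one_add_sq, ← hK.tsum_eq] at hlim
  simp_rw [hval] at hlim
  have hfin := (hlim.add (tendsto_arsinh_sub_log hx)).sub tendsto_harmonic_sub_log
  -- The terms of the series have constant sign, so convergence of the partial sums suffices.
  have hneg : HasSum (fun n : ℕ => -(1 / √(((n : ℝ) + 1) ^ 2 + x ^ 2) - 1 / ((n : ℝ) + 1)))
      (-(2 * ∑' n : ℕ, besselK0 (2 * π * (n + 1) * x) - 1 / (π * x) * (π / 2 - arctan 0)
        + -log (x / 2) - eulerMascheroniConstant)) := by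
    rw [hasSum_iff_tendsto_nat_of_nonneg]
    · refine hfin.neg.congr fun N => ?_
      rw [Finset.sum_neg_distrib, Finset.sum_sub_distrib, harmonic]
      push_cast
      simp only [one_div]
      ring
    · intro n
      rw [neg_sub, sub_nonneg]
      refine one_div_le_one_div_of_le (by positivity) (le_sqrt_of_sq_le ?_)
      nlinarith
  have := hneg.neg.tsum_eq
  simp only [neg_neg] at this
  rw [this, arctan_zero]
  field_simp
  ring
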